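/- (Cooperation-enforcing linear relation.) Let p : Fin 4 → ℝ, q : Fin 2 → ℝ, and let M be the 4×4 matrix with M i 0 = p i · q 0, M i 1 = p i · (1 − q 0), M i 2 = (1 − p i) · q 1, M i 3 = (1 − p i) · (1 − q 1); let p̃ = (p 0 − 1, p 1 − 1, p 2, p 3). Let v : Fin 4 → ℝ satisfy ∑ᵢ v i · M i j = v j for every j and ∑ᵢ v i = 1, and let x, y : Fin 4 → ℝ with E_b = ∑ᵢ v i · x i and E_r = ∑ᵢ v i · y i. If there exist γ ≠ 0 and χ ∈ ℝ such that p̃ i = γ·((x i − x 0) − χ·(y i − y 0)) for every i ∈ Fin 4, then E_b − x 0 = χ·(E_r − y 0). -/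

import Mathlib

/-!
Summing stationarity over the states in which the leader cooperates says that the probability of
cooperating in the next round equals the probability of having cooperated in the last one, that is,
`∑ i, v i * p̃ i = 0` (Akin's lemma). A strategy whose `p̃` is an affine function of the payoffs
therefore imposes that affine relation on the expected payoffs, whatever the opponent does.
-/

section ZeroDeterminant

variable {ι R : Type*}

theorem sum_mul_sub_const_of_sum_eq_one [Fintype ι] [Ring R] {v : ι → R}
    (hsum : ∑ i, v i = 1) (x : ι → R) (a : R) :
    ∑ i, v i * (x i - a) = ∑ i, v i * x i - a := by
  simp only [mul_sub, Finset.sum_sub_distrib, ← Finset.sum_mul, hsum, one_mul]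

variable [DecidableEq ι]

/-- The zero-determinant vector `p̃` of a memory-one strategy `p`, where `p i` is the probability
of cooperating after state `i` and `C` is the set of states in which the player has cooperated:
`p̃ i` is the change in the probability of cooperation from a round ending in state `i` to the
next one. -/
def zdVector [Ring R] (C : Finset ι) (p : ι → R) (i : ι) : R :=
  p i - if i ∈ C then 1 else 0

theorem zdVector_zero_one_fin_four [Ring R] (p : Fin 4 → R) :
    zdVector {0, 1} p = ![p 0 - 1, p 1 - 1, p 2, p 3] := by
  funext i
  fin_cases i <;> simp [zdVector]

variable [Fintype ι]

theorem sum_mul_zdVector_eq_zero [Ring R] {C : Finset ι} {p v : ι → R} {M : ι → ι → R}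
    (hp : ∀ i, ∑ j ∈ C, M i j = p i) (hstat : ∀ j, ∑ i, v i * M i j = v j) :
    ∑ i, v i * zdVector C p i = 0 := by
  have next_eq_last : ∑ i, v i * p i = ∑ j ∈ C, v j := calc
    ∑ i, v i * p i = ∑ i, ∑ j ∈ C, v i * M i j := by simp only [← hp, Finset.mul_sum]
    _ = ∑ j ∈ C, ∑ i, v i * M i j := Finset.sum_comm
    _ = ∑ j ∈ C, v j := by simp only [hstat]
  simp [zdVector, mul_sub, next_eq_last]

theorem cooperation_enforcing_linear_relation_general [CommRing R] [NoZeroDivisors R]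
    {C : Finset ι} {p v x y : ι → R} {M : ι → ι → R} {γ χ a b : R} (hγ : γ ≠ 0)
    (hp : ∀ i, ∑ j ∈ C, M i j = p i) (hstat : ∀ j, ∑ i, v i * M i j = v j)
    (hsum : ∑ i, v i = 1) (hzd : ∀ i, zdVector C p i = γ * ((x i - a) - χ * (y i - b))) :
    ∑ i, v i * x i - a = χ * (∑ i, v i * y i - b) := by
  have scaled_relation : γ * ((∑ i, v i * x i - a) - χ * (∑ i, v i * y i - b)) = 0 := calc
    _ = γ * (∑ i, v i * (x i - a) - χ * ∑ i, v i * (y i - b)) := by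
      simp only [sum_mul_sub_const_of_sum_eq_one hsum]
    _ = ∑ i, v i * zdVector C p i := by
      simp only [hzd, Finset.mul_sum, ← Finset.sum_sub_distrib]
      exact Finset.sum_congr rfl fun i _ => by ring
    _ = 0 := sum_mul_zdVector_eq_zero hp hstat
  exact sub_eq_zero.mp ((mul_eq_zero.mp scaled_relation).resolve_left hγ)

end ZeroDeterminant

/-- cooperation-enforcing linear relation: if the leader sets
`p̃ = γ((x − x₀·1) − χ(y − y₀·1))` with `γ ≠ 0`, then the expected payoffs
satisfy `E_b − x₀ = χ·(E_r − y₀)`. -/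
theorem cooperation_enforcing_linear_relation
    (p : Fin 4 → ℝ) (q : Fin 2 → ℝ) (M : Fin 4 → Fin 4 → ℝ) (v x y : Fin 4 → ℝ)
    (γ χ : ℝ) (hγ : γ ≠ 0)
    (hM0 : ∀ i, M i 0 = p i * q 0)
    (hM1 : ∀ i, M i 1 = p i * (1 - q 0))
    (hM2 : ∀ i, M i 2 = (1 - p i) * q 1)
    (hM3 : ∀ i, M i 3 = (1 - p i) * (1 - q 1))
    (hstat : ∀ j, ∑ i, v i * M i j = v j)
    (hsum : ∑ i, v i = 1)
    (hzd : ∀ i, (![p 0 - 1, p 1 - 1, p 2, p 3] : Fin 4 → ℝ) i =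
      γ * ((x i - x 0) - χ * (y i - y 0))) :
    (∑ i, v i * x i) - x 0 = χ * ((∑ i, v i * y i) - y 0) := by
  have hp : ∀ i, ∑ j ∈ {0, 1}, M i j = p i := fun i => by
    rw [Finset.sum_pair zero_ne_one, hM0, hM1]; ring
  exact cooperation_enforcing_linear_relation_general hγ hp hstat hsum fun i => by
    rw [zdVector_zero_one_fin_four, hzd]
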